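/- Let n ≥ 2, let {i_1,…,i_k} be a set of distinct indices in {1,…,n} with k ≤ n, and let α, β ∈ IO_∞(ℤ^n_lex); write α(i,j) = (i, α^i(j)) for (i,j) ∈ dom α. Then there exist idempotents ε_1, …, ε_k ∈ IO_∞(ℤ^n_lex) with dom ε_m ⊇ ({1,…,n} \ {i_m}) × ℤ for each m and α·ε_1⋯ε_k = β·ε_1⋯ε_k (i.e., α σ_{[i_1,…,i_k]} β) if and only if the following two conditions hold: (i) there exists a positive integer p such that for every i ∈ {i_1,…,i_k} and every integer j with |j| ≥ p, (i,j) ∈ dom α ∩ dom β and α^i(j) = β^i(j); and (ii) dom α ∩ (({1,…,n} \ {i_1,…,i_k}) × ℤ) = dom β ∩ (({1,…,n} \ {i_1,…,i_k}) × ℤ) and α(i,j) = β(i,j) for all (i,j) in this common set. -/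

import Mathlib

/-- Composition of partial selfmaps (left map applied first):
`dom (PComp f g) = {x ∈ dom f : f x ∈ dom g}` and `(PComp f g) x = g (f x)`. -/
def PComp {X : Type*} (f g : X → Option X) : X → Option X := fun x => (f x).bind g

/-- The identity partial selfmap (everywhere defined). -/
def PId {X : Type*} : X → Option X := fun x => some x

/-- A partial selfmap is injective. -/
def PInj {X : Type*} (f : X → Option X) : Prop :=
  ∀ ⦃x y a : X⦄, f x = some a → f y = some a → x = y

/-- A partial selfmap is monotone with respect to the relation `r`. -/
def PMono {X : Type*} (r : X → X → Prop) (f : X → Option X) : Prop :=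
  ∀ ⦃x y a b : X⦄, r x y → f x = some a → f y = some b → r a b

/-- The domain of a partial selfmap is cofinite. -/
def DomCof {X : Type*} (f : X → Option X) : Prop := {x | f x = none}.Finite

/-- The range (image) of a partial selfmap is cofinite. -/
def RanCof {X : Type*} (f : X → Option X) : Prop := {y | ∀ x, f x ≠ some y}.Finite

/-- `IOmap r f` says that `f` is a monotone (w.r.t. `r`) injective partial selfmap
with cofinite domain and cofinite image, i.e. an element of `IO_∞`. -/
def IOmap {X : Type*} (r : X → X → Prop) (f : X → Option X) : Prop :=
  PInj f ∧ PMono r f ∧ DomCof f ∧ RanCof f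

/-- The lexicographic order on `L_n × ℤ` (with `L_n = Fin n`):
`(i,m) ≤ (j,k)` iff `i < j`, or `i = j` and `m ≤ k`. -/
def lexLe (n : ℕ) (p q : Fin n × ℤ) : Prop :=
  p.1 < q.1 ∨ (p.1 = q.1 ∧ p.2 ≤ q.2)

/-- The domain of a partial selfmap, as a set. -/
def pdom {X : Type*} (f : X → Option X) : Set X := {x | ∃ y, f x = some y}

/-- The range (image) of a partial selfmap, as a set. -/
def pran {X : Type*} (f : X → Option X) : Set X := {y | ∃ x, f x = some y}

/-!
Let `I` be a well-order. For `x ≤ y` in `I ×_lex ℤ`, the interval between `x` and `y` is finite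
exactly when `x` and `y` lie on the same line. Up to finitely many points, a monotone injective
cofinite partial selfmap embeds the interval between two points into the interval between their
images. Hence it is strictly increasing on first coordinates; by well-foundedness it cannot lower a
first coordinate, and since its inverse is again such a map, it preserves them.

The products of idempotents in the theorem are exactly the identity maps of cofinite sets `s` that
contain all lines outside `ι`. Hence the congruence says that `f` and `g` agree after removing
finitely many image points on the lines `ι m`; as `f` and `g` preserve lines, this removes finitely
many arguments on the same lines.
-/

section PartialMap

variable {X : Type*} {f g : X → Option X} {r : X → X → Prop}

lemma PInj.finite_preimage (hf : PInj f) {t : Set X} (ht : t.Finite) :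
    (f ⁻¹' (some '' t)).Finite := by
  refine (ht.image some).preimage ?_
  rintro x ⟨a, -, hx⟩ y - hxy
  exact hf hx.symm (hxy ▸ hx.symm)

lemma DomCof.pcomp (hf : DomCof f) (hfi : PInj f) (hg : DomCof g) : DomCof (PComp f g) := by
  refine (hf.union (hfi.finite_preimage hg)).subset fun x hx => ?_
  cases hfx : f x with
  | none => exact Or.inl hfx
  | some y =>
    simp only [Set.mem_ofPred_eq, PComp, hfx, Option.bind_some] at hx
    exact Or.inr ⟨y, hx, hfx.symm⟩

lemma domCof_iff_finite_compl_pdom : DomCof f ↔ (pdom f)ᶜ.Finite := by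
  have hcompl : (pdom f)ᶜ = {x | f x = none} := by
    ext x
    simp only [pdom, Set.mem_compl_iff, Set.mem_ofPred_eq, ← Option.ne_none_iff_exists', not_not]
  rw [hcompl, DomCof]

lemma PInj.exists_coe_pequiv_eq (hf : PInj f) : ∃ e : X ≃. X, ⇑e = f := by
  classical
  refine ⟨⟨f, fun a => if h : ∃ x, f x = some a then some h.choose else none, fun x a => ?_⟩, rfl⟩
  constructor
  · intro h
    split_ifs at h with hx
    exact Option.some.inj h ▸ hx.choose_spec
  · intro (h : f x = some a)
    have hx : ∃ x, f x = some a := ⟨x, h⟩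
    simp only [dif_pos hx, hf hx.choose_spec h]

lemma IOmap.symm [Std.Antisymm r] [Std.Total r] {e : X ≃. X} (he : IOmap r e) :
    IOmap r e.symm := by
  obtain ⟨-, hmono, hdom, hran⟩ := he
  refine ⟨fun a b x => e.symm.inj, fun a b x y hab ha hb => ?_, ?_, ?_⟩
  · rw [e.eq_some_iff] at ha hb
    rcases total_of r x y with hxy | hyx
    · exact hxy
    · obtain rfl : a = b := antisymm_of r hab (hmono hyx hb ha)
      exact e.inj ha hb ▸ refl_of r x
  · simpa only [DomCof, RanCof, Option.eq_none_iff_forall_ne_some, Ne, e.eq_some_iff] using hran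
  · simpa only [DomCof, RanCof, Option.eq_none_iff_forall_ne_some, Ne, e.eq_some_iff] using hdom

lemma PMono.finite_between (hmono : PMono r f) (hinj : PInj f) (hdom : DomCof f) {x y a b : X}
    (hx : f x = some a) (hy : f y = some b) (hab : {c | r a c ∧ r c b}.Finite) :
    {z | r x z ∧ r z y}.Finite := by
  refine (hdom.union (hinj.finite_preimage hab)).subset fun z ⟨hxz, hzy⟩ => ?_
  cases hz : f z with
  | none => exact Or.inl hz
  | some c => exact Or.inr ⟨c, ⟨hmono hxz hx hz, hmono hzy hz hy⟩, hz.symm⟩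

end PartialMap

section Idempotent

variable {X : Type*} {f g e : X → Option X} {r : X → X → Prop} {s t : Set X}

open Classical in
/-- The identity map of `s` as a partial selfmap of `X`; for cofinite `s` these are the idempotents
of `IO_∞`. Fixing the classical decidability instance lets one rewrite in `s`. -/
noncomputable def PIdOn (s : Set X) : X → Option X := PEquiv.ofSet s

lemma pIdOn_eq_some_iff {x y : X} : PIdOn s x = some y ↔ y = x ∧ y ∈ s :=
  PEquiv.ofSet_eq_some_iff

lemma pdom_pIdOn : pdom (PIdOn s) = s := by
  ext x
  simp only [pdom, Set.mem_ofPred_eq, pIdOn_eq_some_iff, exists_eq_left]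

lemma domCof_pIdOn (hs : sᶜ.Finite) : DomCof (PIdOn s) := by
  rwa [domCof_iff_finite_compl_pdom, pdom_pIdOn]

lemma ioMap_pIdOn (hs : sᶜ.Finite) : IOmap r (PIdOn s) := by
  refine ⟨fun x y a hx hy => ?_, fun x y a b hxy hx hy => ?_, domCof_pIdOn hs, ?_⟩
  · rw [pIdOn_eq_some_iff] at hx hy
    exact hx.1.symm.trans hy.1
  · rw [pIdOn_eq_some_iff] at hx hy
    rwa [hx.1, hy.1]
  · exact hs.subset fun y hy hys => hy y (pIdOn_eq_some_iff.2 ⟨rfl, hys⟩)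

lemma PInj.eq_pIdOn_pdom (he : PInj e) (hee : PComp e e = e) : e = PIdOn (pdom e) := by
  have hself {x y : X} (hxy : e x = some y) : y = x := by
    have hyy := congrFun hee x
    simp only [PComp, hxy, Option.bind_some] at hyy
    exact he hyy hxy
  ext x y
  rw [pIdOn_eq_some_iff]
  constructor
  · intro hxy
    obtain rfl := hself hxy
    exact ⟨rfl, y, hxy⟩
  · rintro ⟨rfl, z, hyz⟩
    exact hself hyz ▸ hyz

lemma pcomp_pIdOn_eq_some_iff {x y : X} :
    PComp f (PIdOn s) x = some y ↔ f x = some y ∧ y ∈ s := by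
  simp only [PComp, Option.bind_eq_some_iff, pIdOn_eq_some_iff]
  grind

lemma pcomp_pIdOn_pIdOn : PComp (PIdOn s) (PIdOn t) = PIdOn (s ∩ t) := by
  ext x y
  rw [pcomp_pIdOn_eq_some_iff, pIdOn_eq_some_iff, pIdOn_eq_some_iff, Set.mem_inter_iff, and_assoc]

lemma foldr_pcomp_pIdOn {k : ℕ} (s : Fin k → Set X) :
    (List.ofFn fun m => PIdOn (s m)).foldr PComp PId = PIdOn (⋂ m, s m) := by
  induction k with
  | zero =>
    ext x y
    rw [pIdOn_eq_some_iff]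
    simp [PId, eq_comm]
  | succ k ih =>
    have hInter : s 0 ∩ ⋂ m : Fin k, s m.succ = ⋂ m, s m := by
      ext x
      simp only [Set.mem_inter_iff, Set.mem_iInter, Fin.forall_fin_succ]
    rw [List.ofFn_succ, List.foldr_cons, ih, pcomp_pIdOn_pIdOn, hInter]

lemma ioMap_idempotent_iff_exists_pIdOn {A : Set X} :
    (IOmap r e ∧ PComp e e = e ∧ ∀ x, x ∉ A → ∃ y, e x = some y) ↔
      ∃ s : Set X, sᶜ.Finite ∧ Aᶜ ⊆ s ∧ e = PIdOn s := by
  constructor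
  · rintro ⟨he, hee, hA⟩
    exact ⟨pdom e, domCof_iff_finite_compl_pdom.1 he.2.2.1, hA, he.1.eq_pIdOn_pdom hee⟩
  · rintro ⟨s, hs, hA, rfl⟩
    refine ⟨ioMap_pIdOn hs, ?_, fun x hx => ⟨x, pIdOn_eq_some_iff.2 ⟨rfl, hA hx⟩⟩⟩
    rw [pcomp_pIdOn_pIdOn, Set.inter_self]

lemma exists_idempotents_pcomp_eq_iff {k : ℕ} (A : Fin k → Set X) :
    (∃ E : Fin k → X → Option X,
        (∀ m, IOmap r (E m) ∧ PComp (E m) (E m) = E m ∧ ∀ x, x ∉ A m → ∃ y, E m x = some y) ∧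
        PComp f ((List.ofFn E).foldr PComp PId) = PComp g ((List.ofFn E).foldr PComp PId)) ↔
      ∃ s : Set X, sᶜ.Finite ∧ (⋃ m, A m)ᶜ ⊆ s ∧
        PComp f (PIdOn s) = PComp g (PIdOn s) := by
  simp only [ioMap_idempotent_iff_exists_pIdOn]
  constructor
  · rintro ⟨E, hE, hfg⟩
    choose s hfin hA hEs using hE
    obtain rfl : E = fun m => PIdOn (s m) := funext hEs
    rw [foldr_pcomp_pIdOn] at hfg
    refine ⟨⋂ m, s m, ?_, ?_, hfg⟩
    · rw [Set.compl_iInter]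
      exact Set.finite_iUnion hfin
    · rw [Set.compl_iUnion]
      exact Set.iInter_mono hA
  · rintro ⟨s, hs, hA, hfg⟩
    have hInter : ⋂ m, (s ∪ (A m)ᶜ) = s := by
      rw [← Set.union_iInter, ← Set.compl_iUnion, Set.union_eq_left.2 hA]
    refine ⟨fun m => PIdOn (s ∪ (A m)ᶜ), fun m => ⟨s ∪ (A m)ᶜ, ?_, ?_, rfl⟩, ?_⟩
    · exact hs.subset (Set.compl_subset_compl.2 Set.subset_union_left)
    · exact Set.subset_union_right
    · rwa [foldr_pcomp_pIdOn, hInter]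

lemma eq_some_of_pcomp_pIdOn_eq (hfg : PComp f (PIdOn s) = PComp g (PIdOn s))
    {x y : X} (hx : f x = some y) (hy : y ∈ s) : g x = some y := by
  have hfx := pcomp_pIdOn_eq_some_iff.2 ⟨hx, hy⟩
  rw [hfg] at hfx
  exact (pcomp_pIdOn_eq_some_iff.1 hfx).1

lemma finite_setOf_disagree (hf : PInj f) (hdom : DomCof f) (hs : sᶜ.Finite)
    (hfg : PComp f (PIdOn s) = PComp g (PIdOn s)) :
    {x | ¬∃ y, f x = some y ∧ g x = some y}.Finite := by
  have hcof : DomCof (PComp f (PIdOn s)) := hdom.pcomp hf (domCof_pIdOn hs)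
  refine hcof.subset fun x hx => Option.eq_none_iff_forall_ne_some.2 fun y hy => hx ⟨y, ?_⟩
  obtain ⟨hfx, hys⟩ := pcomp_pIdOn_eq_some_iff.1 hy
  exact ⟨hfx, eq_some_of_pcomp_pIdOn_eq hfg hfx hys⟩

lemma exists_pcomp_pIdOn_eq_of_finite {T A : Set X} (hT : T.Finite) (hTA : T ⊆ A)
    (hfA : ∀ ⦃x y⦄, f x = some y → x ∈ A → y ∈ A)
    (hgA : ∀ ⦃x y⦄, g x = some y → x ∈ A → y ∈ A) (hfg : Set.EqOn f g Tᶜ) :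
    ∃ s : Set X, sᶜ.Finite ∧ Aᶜ ⊆ s ∧ PComp f (PIdOn s) = PComp g (PIdOn s) := by
  set F : Set X := some ⁻¹' (f '' T ∪ g '' T)
  have hFfin : F.Finite :=
    ((hT.image f).union (hT.image g)).preimage (Option.some_injective X).injOn
  have hFA : F ⊆ A := by
    rintro y (⟨x, hxT, hx⟩ | ⟨x, hxT, hx⟩)
    · exact hfA hx (hTA hxT)
    · exact hgA hx (hTA hxT)
  refine ⟨Fᶜ, by rwa [compl_compl], Set.compl_subset_compl.2 hFA, ?_⟩
  ext x y
  rw [pcomp_pIdOn_eq_some_iff, pcomp_pIdOn_eq_some_iff]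
  refine and_congr_left fun hyF => ?_
  by_cases hxT : x ∈ T
  · exact iff_of_false (fun hx => hyF (Or.inl ⟨x, hxT, hx⟩)) fun hx => hyF (Or.inr ⟨x, hxT, hx⟩)
  · rw [hfg hxT]

lemma exists_pcomp_pIdOn_eq_iff {A : Set X} (hf : PInj f) (hdom : DomCof f)
    (hfA : ∀ ⦃x y⦄, f x = some y → (y ∈ A ↔ x ∈ A))
    (hgA : ∀ ⦃x y⦄, g x = some y → (y ∈ A ↔ x ∈ A)) :
    (∃ s : Set X, sᶜ.Finite ∧ Aᶜ ⊆ s ∧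
        PComp f (PIdOn s) = PComp g (PIdOn s)) ↔
      (A ∩ {x | ¬∃ y, f x = some y ∧ g x = some y}).Finite ∧ Set.EqOn f g Aᶜ := by
  constructor
  · rintro ⟨s, hs, hAs, hfg⟩
    refine ⟨(finite_setOf_disagree hf hdom hs hfg).inter_of_right A,
      fun x hx => Option.ext fun y => ⟨fun hy => ?_, fun hy => ?_⟩⟩
    · exact eq_some_of_pcomp_pIdOn_eq hfg hy (hAs (mt (hfA hy).1 hx))
    · exact eq_some_of_pcomp_pIdOn_eq hfg.symm hy (hAs (mt (hgA hy).1 hx))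
  · rintro ⟨hfin, heq⟩
    refine exists_pcomp_pIdOn_eq_of_finite hfin Set.inter_subset_left (fun _ _ hx => (hfA hx).2)
      (fun _ _ hx => (hgA hx).2) fun x hx => ?_
    by_cases hxA : x ∈ A
    · obtain ⟨y, hfx, hgx⟩ : ∃ y, f x = some y ∧ g x = some y :=
        not_not.1 fun hbad => hx ⟨hxA, hbad⟩
      rw [hfx, hgx]
    · exact heq hxA

end Idempotent

section Lex

variable {I J : Type*}

lemma DomCof.exists_eq_some [Infinite J] {f : I × J → Option (I × J)} (hf : DomCof f) (i : I) :
    ∃ j a, f (i, j) = some a := by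
  obtain ⟨_, ⟨j, rfl⟩, hj⟩ :=
    (Set.infinite_range_of_injective (Prod.mk_right_injective i)).exists_notMem_finite hf
  exact ⟨j, Option.ne_none_iff_exists'.1 hj⟩

lemma infinite_between_lex [LT I] [Preorder J] [NoMaxOrder J] {x y : I × J} (hxy : x.1 < y.1) :
    {z | Prod.Lex (· < ·) (· ≤ ·) x z ∧ Prod.Lex (· < ·) (· ≤ ·) z y}.Infinite := by
  refine ((Set.Ici_infinite x.2).image (Prod.mk_right_injective x.1).injOn).mono ?_
  rintro _ ⟨j, hj, rfl⟩
  exact ⟨Prod.lex_def.2 (Or.inr ⟨rfl, hj⟩), Prod.lex_def.2 (Or.inl hxy)⟩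

lemma finite_between_lex [PartialOrder I] [Preorder J] [LocallyFiniteOrder J] {a b : I × J}
    (hba : b.1 ≤ a.1) :
    {c | Prod.Lex (· < ·) (· ≤ ·) a c ∧ Prod.Lex (· < ·) (· ≤ ·) c b}.Finite := by
  refine ((Set.finite_singleton a.1).prod (Set.finite_Icc a.2 b.2)).subset fun c ⟨hac, hcb⟩ => ?_
  rw [Prod.lex_def] at hac hcb
  have hac₁ : a.1 ≤ c.1 := hac.elim le_of_lt fun h => h.1.le
  have hcb₁ : c.1 ≤ b.1 := hcb.elim le_of_lt fun h => h.1.le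
  have hca : c.1 = a.1 := le_antisymm (hcb₁.trans hba) hac₁
  exact ⟨hca, (hac.resolve_left hca.not_gt).2, (hcb.resolve_left (hba.trans hac₁).not_gt).2⟩

variable [LinearOrder I] {f : I × J → Option (I × J)}

lemma IOmap.fst_lt_fst [Preorder J] [NoMaxOrder J] [LocallyFiniteOrder J]
    (hf : IOmap (Prod.Lex (· < ·) (· ≤ ·)) f) {x y a b : I × J}
    (hx : f x = some a) (hy : f y = some b) (hxy : x.1 < y.1) : a.1 < b.1 := by
  by_contra! hba
  obtain ⟨hinj, hmono, hdom, -⟩ := hf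
  exact infinite_between_lex hxy (hmono.finite_between hinj hdom hx hy (finite_between_lex hba))

variable [WellFoundedLT I]

lemma IOmap.fst_le_fst [Preorder J] [NoMaxOrder J] [LocallyFiniteOrder J]
    (hf : IOmap (Prod.Lex (· < ·) (· ≤ ·)) f) {x a : I × J} (hx : f x = some a) : x.1 ≤ a.1 := by
  obtain ⟨i, j⟩ := x
  induction i using WellFoundedLT.induction generalizing j a with
  | ind i ih =>
    by_contra! hai
    have : Nonempty J := ⟨j⟩
    have : Infinite J := NoMaxOrder.infinite
    obtain ⟨j₁, b, hb⟩ := hf.2.2.1.exists_eq_some a.1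
    have hba : b.1 < a.1 := hf.fst_lt_fst hb hx hai
    exact (ih a.1 hai j₁ hb).not_gt hba

lemma IOmap.fst_eq_fst [LinearOrder J] [NoMaxOrder J] [LocallyFiniteOrder J]
    (hf : IOmap (Prod.Lex (· < ·) (· ≤ ·)) f) {x a : I × J} (hx : f x = some a) : a.1 = x.1 := by
  obtain ⟨e, rfl⟩ := hf.1.exists_coe_pequiv_eq
  exact le_antisymm (hf.symm.fst_le_fst (e.eq_some_iff.2 hx)) (hf.fst_le_fst hx)

end Lex

lemma finite_lines_inter_setOf_not_iff_exists_abs {I κ : Type*} [Finite κ] {ι : κ → I}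
    {P : I × ℤ → Prop} :
    ((⋃ m, {x : I × ℤ | x.1 = ι m}) ∩ {x | ¬P x}).Finite ↔
      ∃ p : ℤ, 0 < p ∧ ∀ (m : κ) (j : ℤ), p ≤ |j| → P (ι m, j) := by
  constructor
  · intro hfin
    obtain ⟨B, hB⟩ := (hfin.image fun x => |x.2|).bddAbove
    refine ⟨max B 0 + 1, by positivity, fun m j hj => not_not.1 fun hP => ?_⟩
    have hjB : |j| ≤ B := hB ⟨(ι m, j), ⟨Set.mem_iUnion.2 ⟨m, rfl⟩, hP⟩, rfl⟩
    have := le_max_left B 0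
    omega
  · rintro ⟨p, -, hp⟩
    refine ((Set.finite_range ι).prod (Set.finite_Ioo (-p) p)).subset ?_
    rintro ⟨i, j⟩ ⟨hi, hP⟩
    obtain ⟨m, rfl⟩ := Set.mem_iUnion.1 hi
    exact ⟨⟨m, rfl⟩, abs_lt.1 (not_le.1 fun hj => hP (hp m j hj))⟩

theorem stmt14_general {I : Type*} [LinearOrder I] [WellFoundedLT I] {k : ℕ} (ι : Fin k → I)
    {f g : I × ℤ → Option (I × ℤ)} (hf : IOmap (Prod.Lex (· < ·) (· ≤ ·)) f)
    (hg : IOmap (Prod.Lex (· < ·) (· ≤ ·)) g) :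
    (∃ E : Fin k → (I × ℤ → Option (I × ℤ)),
        (∀ m : Fin k, IOmap (Prod.Lex (· < ·) (· ≤ ·)) (E m) ∧ PComp (E m) (E m) = E m ∧
          ∀ x : I × ℤ, x.1 ≠ ι m → ∃ y, E m x = some y) ∧
        PComp f ((List.ofFn E).foldr PComp PId) =
          PComp g ((List.ofFn E).foldr PComp PId)) ↔
    ((∃ p : ℤ, 0 < p ∧ ∀ (m : Fin k) (j : ℤ), p ≤ |j| →
        ∃ y, f (ι m, j) = some y ∧ g (ι m, j) = some y) ∧
     (∀ i : I, (∀ m : Fin k, i ≠ ι m) → ∀ j : ℤ, f (i, j) = g (i, j))) := by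
  let A : Fin k → Set (I × ℤ) := fun m => {x | x.1 = ι m}
  have mem_congr {x y : I × ℤ} (h : y.1 = x.1) : y ∈ ⋃ m, A m ↔ x ∈ ⋃ m, A m := by
    simp only [A, Set.mem_iUnion, Set.mem_ofPred_eq, h]
  have eqOn_iff : Set.EqOn f g (⋃ m, A m)ᶜ ↔
      ∀ i : I, (∀ m : Fin k, i ≠ ι m) → ∀ j : ℤ, f (i, j) = g (i, j) := by
    simp only [A, Set.EqOn, Prod.forall, Set.mem_compl_iff, Set.mem_iUnion, Set.mem_ofPred_eq,
      not_exists]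
    grind
  calc _ ↔ _ := exists_idempotents_pcomp_eq_iff A
    _ ↔ _ := exists_pcomp_pIdOn_eq_iff hf.1 hf.2.2.1 (fun _ _ hx => mem_congr (hf.fst_eq_fst hx))
      fun _ _ hx => mem_congr (hg.fst_eq_fst hx)
    _ ↔ _ := and_congr finite_lines_inter_setOf_not_iff_exists_abs eqOn_iff

lemma lexLe_eq_prodLex (n : ℕ) : lexLe n = Prod.Lex (· < ·) (· ≤ ·) := by
  ext x y
  exact Prod.lex_def.symm

/-- Description of the congruence `σ_{[i_1,…,i_k]}` on `IO_∞(ℤ^n_lex)` (n ≥ 2), where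
`{i_1,…,i_k} = range ι` for an injective `ι : Fin k → Fin n`, `k ≤ n`:
`α σ_{[i_1,…,i_k]} β` — i.e. `α·ε_1⋯ε_k = β·ε_1⋯ε_k` for some idempotents
`ε_m ∈ IO_∞(ℤ^n_lex)` with `dom ε_m ⊇ ({1,…,n} \ {i_m}) × ℤ` — holds iff
(i) for some positive `p`, `α` and `β` are defined and agree at `(i, j)` for every
`i ∈ {i_1,…,i_k}` and every `|j| ≥ p`, and (ii) `α` and `β` have the same domain and
the same values on the lines outside `{i_1,…,i_k}`. -/
theorem stmt14 (n k : ℕ) (hn : 2 ≤ n) (hk : k ≤ n)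
    (ι : Fin k → Fin n) (hι : Function.Injective ι)
    (f g : Fin n × ℤ → Option (Fin n × ℤ))
    (hf : IOmap (lexLe n) f) (hg : IOmap (lexLe n) g) :
    (∃ E : Fin k → (Fin n × ℤ → Option (Fin n × ℤ)),
        (∀ m : Fin k, IOmap (lexLe n) (E m) ∧ PComp (E m) (E m) = E m ∧
          ∀ x : Fin n × ℤ, x.1 ≠ ι m → ∃ y, E m x = some y) ∧
        PComp f ((List.ofFn E).foldr PComp PId) =
          PComp g ((List.ofFn E).foldr PComp PId)) ↔
    ((∃ p : ℤ, 0 < p ∧ ∀ (m : Fin k) (j : ℤ), p ≤ |j| →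
        ∃ y, f (ι m, j) = some y ∧ g (ι m, j) = some y) ∧
     (∀ i : Fin n, (∀ m : Fin k, i ≠ ι m) → ∀ j : ℤ, f (i, j) = g (i, j))) := by
  rw [lexLe_eq_prodLex] at hf hg ⊢
  exact stmt14_general ι hf hg
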